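/- Let F be an infinite field and let Q = (5,2), so u = 5, r = 3 and N = 9 with coordinates x = (a_1, a_2, a_3, a_4, b_1, g_0, g_1, h_0, h_1) ∈ F^9. Then the Zariski closure in F^9 of the set { x ∈ F^9 : the Jordan type of M_x equals (3,3,1) } is exactly { x ∈ F^9 : a_1 = 0 and b_1 = 0 }. -/

import Mathlib

open Polynomial

noncomputable section

/-- The quotient module `F[t]/(t^m)`. -/
abbrev PQ (F : Type*) [Field F] (m : ℕ) : Type _ := F[X] ⧸ Ideal.span {(X : F[X]) ^ m}

variable (F : Type*) [Field F]

lemma mulQ_cond (m m' : ℕ) (c : F[X]) (h : (X : F[X]) ^ m' ∣ c * X ^ m) :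
    Ideal.span {(X : F[X]) ^ m} ≤
      Submodule.comap (LinearMap.mulLeft F[X] c) (Ideal.span {(X : F[X]) ^ m'}) := by
  rw [Ideal.span_le]
  intro x hx
  rw [Set.mem_singleton_iff] at hx
  subst hx
  simp only [SetLike.mem_coe, Submodule.mem_comap, LinearMap.mulLeft_apply]
  exact Ideal.mem_span_singleton.mpr h

/-- The `F`-linear map `F[t]/(t^m) → F[t]/(t^{m'})` induced by multiplication by the
polynomial `c`, well-defined whenever `t^{m'} ∣ c · t^m`. -/
def mulQ (m m' : ℕ) (c : F[X]) (h : (X : F[X]) ^ m' ∣ c * X ^ m) :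
    PQ F m →ₗ[F] PQ F m' :=
  LinearMap.restrictScalars F
    (Submodule.mapQ (Ideal.span {(X : F[X]) ^ m}) (Ideal.span {(X : F[X]) ^ m'})
      (LinearMap.mulLeft F[X] c) (mulQ_cond F m m' c h))

lemma dvd_A (u : ℕ) (c : F[X]) : (X : F[X]) ^ u ∣ c * X ^ u := Dvd.intro c (mul_comm _ _)

lemma dvd_G (u r : ℕ) (hru : r ≤ u) (g : F[X]) :
    (X : F[X]) ^ u ∣ (X ^ r * g) * X ^ (u - r) := by
  refine Dvd.intro g ?_
  rw [mul_comm ((X:F[X])^r) g, mul_assoc, ← pow_add, Nat.add_sub_cancel' hru, mul_comm]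

lemma dvd_H (u r : ℕ) (h : F[X]) : (X : F[X]) ^ (u - r) ∣ h * X ^ u :=
  Dvd.dvd.mul_left (pow_dvd_pow _ (Nat.sub_le u r)) h

/-- The `F[t]`-module endomorphism of `V = F[t]/(t^u) ⊕ t^r·F[t]/(t^u)` given by
`M(v₁, v₂) = (a v₁ + g v₂, h t^r v₁ + b v₂)`, where the second summand
`t^r·F[t]/(t^u)` is identified with `F[t]/(t^{u-r})` via `w ↦ t^r w`
(so the lower-left entry becomes `v₁ ↦ h v₁ mod t^{u-r}` and the upper-right
entry becomes `w ↦ t^r g w mod t^u`). -/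
def Mmap (u r : ℕ) (hru : r ≤ u) (a g h b : F[X]) :
    (PQ F u × PQ F (u - r)) →ₗ[F] (PQ F u × PQ F (u - r)) :=
  LinearMap.prod
    ((mulQ F u u a (dvd_A F u a)).comp (LinearMap.fst F (PQ F u) (PQ F (u - r))) +
      (mulQ F (u - r) u (X ^ r * g) (dvd_G F u r hru g)).comp
        (LinearMap.snd F (PQ F u) (PQ F (u - r))))
    ((mulQ F u (u - r) h (dvd_H F u r h)).comp (LinearMap.fst F (PQ F u) (PQ F (u - r))) +
      (mulQ F (u - r) (u - r) b (dvd_A F (u - r) b)).comp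
        (LinearMap.snd F (PQ F u) (PQ F (u - r))))

/-- `B` has Jordan type `P` (a partition given as the multiset of its parts):
the corank of every power of `B` is the one prescribed by `P`, i.e.
`dim ker (B^s) = Σ_i min(pᵢ, s)` for all `s ≥ 0`. -/
def JordanTypeIs {V : Type*} [AddCommGroup V] [Module F V] (B : Module.End F V)
    (P : Multiset ℕ) : Prop :=
  ∀ s : ℕ, Module.finrank F (LinearMap.ker (B ^ s)) = (P.map fun p => min p s).sum

/-- Index type for the `N = 4u-3r-2` coordinates
`(a_1,…,a_{u−1}, b_1,…,b_{u−r−1}, g_0,…,g_{u−r−1}, h_0,…,h_{u−r−1})`. -/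
abbrev Vars (u r : ℕ) : Type := Fin (u - 1) ⊕ Fin (u - r - 1) ⊕ Fin (u - r) ⊕ Fin (u - r)

/-- `a = Σ_{i=1}^{u−1} a_i t^i`. -/
def paOf (u r : ℕ) (x : Vars u r → F) : F[X] :=
  ∑ i : Fin (u - 1), C (x (Sum.inl i)) * X ^ ((i : ℕ) + 1)

/-- `b = Σ_{i=1}^{u−r−1} b_i t^i`. -/
def pbOf (u r : ℕ) (x : Vars u r → F) : F[X] :=
  ∑ i : Fin (u - r - 1), C (x (Sum.inr (Sum.inl i))) * X ^ ((i : ℕ) + 1)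

/-- `g = Σ_{i=0}^{u−r−1} g_i t^i`. -/
def pgOf (u r : ℕ) (x : Vars u r → F) : F[X] :=
  ∑ i : Fin (u - r), C (x (Sum.inr (Sum.inr (Sum.inl i)))) * X ^ (i : ℕ)

/-- `h = Σ_{i=0}^{u−r−1} h_i t^i`. -/
def phOf (u r : ℕ) (x : Vars u r → F) : F[X] :=
  ∑ i : Fin (u - r), C (x (Sum.inr (Sum.inr (Sum.inr i)))) * X ^ (i : ℕ)

/-- The nilpotent endomorphism `M_x` of `V` determined by the point `x ∈ F^N`. -/
def Mx (u r : ℕ) (hru : r ≤ u) (x : Vars u r → F) :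
    Module.End F (PQ F u × PQ F (u - r)) :=
  Mmap F u r hru (paOf F u r x) (pgOf F u r x) (phOf F u r x) (pbOf F u r x)

/-- The variable `a_i` as a polynomial function on `F^N` (meaningful for `1 ≤ i ≤ u-1`). -/
def Av (u r : ℕ) (i : ℕ) : MvPolynomial (Vars u r) F :=
  if h : i - 1 < u - 1 then MvPolynomial.X (Sum.inl ⟨i - 1, h⟩) else 0

/-- The variable `b_i` as a polynomial function on `F^N` (meaningful for `1 ≤ i ≤ u-r-1`). -/
def Bv (u r : ℕ) (i : ℕ) : MvPolynomial (Vars u r) F :=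
  if h : i - 1 < u - r - 1 then MvPolynomial.X (Sum.inr (Sum.inl ⟨i - 1, h⟩)) else 0

/-- The variable `g_i` as a polynomial function on `F^N` (meaningful for `0 ≤ i ≤ u-r-1`). -/
def Gv (u r : ℕ) (i : ℕ) : MvPolynomial (Vars u r) F :=
  if h : i < u - r then MvPolynomial.X (Sum.inr (Sum.inr (Sum.inl ⟨i, h⟩))) else 0

/-- The variable `h_i` as a polynomial function on `F^N` (meaningful for `0 ≤ i ≤ u-r-1`). -/
def Hv (u r : ℕ) (i : ℕ) : MvPolynomial (Vars u r) F :=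
  if h : i < u - r then MvPolynomial.X (Sum.inr (Sum.inr (Sum.inr ⟨i, h⟩))) else 0

/-- The set of polynomials `E^Q_{k,l}` for `Q = (u, u-r)`:
`{a_1,…,a_{k−1}, b_1,…,b_{l−1}}` if `k+l ≤ r`, and
`{a_1,…,a_{k−1}, b_1,…,b_{r−k−1}}` together with the quadratic polynomials
`Σ_{j=0}^{m} a_{k+j} b_{r−k+m−j} − Σ_{j=0}^{m} g_j h_{m−j}` for `0 ≤ m ≤ k+l−r−1`
if `k+l ≥ r+1`. -/
def Eset (u r k l : ℕ) : Set (MvPolynomial (Vars u r) F) :=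
  if k + l ≤ r then
    {p | ∃ i, 1 ≤ i ∧ i ≤ k - 1 ∧ p = Av F u r i} ∪
      {p | ∃ i, 1 ≤ i ∧ i ≤ l - 1 ∧ p = Bv F u r i}
  else
    {p | ∃ i, 1 ≤ i ∧ i ≤ k - 1 ∧ p = Av F u r i} ∪
      {p | ∃ i, 1 ≤ i ∧ i ≤ r - k - 1 ∧ p = Bv F u r i} ∪
      {p | ∃ m, m ≤ k + l - r - 1 ∧ p =
        (∑ j ∈ Finset.range (m + 1), Av F u r (k + j) * Bv F u r (r - k + m - j)) -
          (∑ j ∈ Finset.range (m + 1), Gv F u r j * Hv F u r (m - j))}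

/-- The common zero locus in `F^N` of a set `T` of polynomials. -/
def zLocus (u r : ℕ) (T : Set (MvPolynomial (Vars u r) F)) : Set (Vars u r → F) :=
  {x | ∀ p ∈ T, MvPolynomial.eval x p = 0}

/-- `X^Q_{k,l}`, the common zero locus of `E^Q_{k,l}`. -/
def Xlocus (u r k l : ℕ) : Set (Vars u r → F) := zLocus F u r (Eset F u r k l)

/-- Zariski-closed subsets of `F^N`: common zero loci of sets of polynomials. -/
def IsZClosed (u r : ℕ) (S : Set (Vars u r → F)) : Prop :=
  ∃ T : Set (MvPolynomial (Vars u r) F), S = zLocus F u r T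

/-- The Zariski closure of a subset of `F^N`. -/
def zClosure (u r : ℕ) (S : Set (Vars u r → F)) : Set (Vars u r → F) :=
  ⋂₀ {C | IsZClosed F u r C ∧ S ⊆ C}

end

section Burge

/-- Scanning the frequency sequence `f` downward from `j`, forming backward pairs:
whenever `f j > 0` (and `j` has not been consumed by a previously formed pair),
put `j` in the set and consume the index `j - 1`. -/
def RsetGo (f : ℕ → ℕ) : ℕ → Finset ℕ
  | 0 => ∅
  | 1 => if 0 < f 1 then {1} else ∅
  | (j + 2) => if 0 < f (j + 2) then insert (j + 2) (RsetGo f j) else RsetGo f (j + 1)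

/-- The set `R(P)` of a partition `P` (given as the multiset of its parts, with
frequency sequence `j ↦ P.count j`); the scan starts at the largest part `P.sup`. -/
def Rset (P : Multiset ℕ) : Finset ℕ := RsetGo (fun j => P.count j) P.sup

/-- The partition `∂P`: for each `j ∈ R(P)` one copy of the part `j` is replaced by
`j - 1` (discarded when `j - 1 = 0`). -/
def dP (P : Multiset ℕ) : Multiset ℕ :=
  (P - (Rset P).val) + (((Rset P).val.map fun j => j - 1).filter fun j => 0 < j)

/-- Fuel-driven computation of the Burge code; `false` stands for `α`, `true` for `β`.
(The fuel `P.sum + 1` used in `burgeCode` always suffices, since `∂` strictly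
decreases the size of a nonempty partition.) -/
def burgeGo : ℕ → Multiset ℕ → List Bool
  | 0, _ => []
  | (n + 1), P =>
    if P = 0 then [false]
    else (if 1 ∈ Rset P then true else false) :: burgeGo n (dP P)

/-- The Burge code of the partition `P`: the word `w_1 ⋯ w_m` with `w_i = β` (`true`)
if `∂^{i-1} P` is in class `B` (i.e. `1 ∈ R(∂^{i-1}P)`) and `w_i = α` (`false`)
otherwise, where `m = min { i : ∂^{i-1} P = (0) }`. -/
def burgeCode (P : Multiset ℕ) : List Bool := burgeGo (P.sum + 1) P

/-- The almost rectangular partition `[m]^k` of `m` into `k` parts, each equal to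
`⌈m/k⌉` or `⌊m/k⌋`. -/
def arPart (m k : ℕ) : Multiset ℕ :=
  Multiset.replicate (m % k) (m / k + 1) + Multiset.replicate (k - m % k) (m / k)

/-- Greedy decomposition of a weakly decreasing list of parts into maximal
almost rectangular segments from the top (fuel-driven helper). -/
def greedyGo : ℕ → List ℕ → List (List ℕ)
  | 0, _ => []
  | _ + 1, [] => []
  | n + 1, p :: rest =>
    ((p :: rest).takeWhile fun q => decide (p ≤ q + 1)) ::
      greedyGo n ((p :: rest).dropWhile fun q => decide (p ≤ q + 1))

/-- The greedy decomposition of a weakly decreasing list of parts into maximal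
almost rectangular subpartitions from the top. -/
def greedy (l : List ℕ) : List (List ℕ) := greedyGo l.length l

end Burge

/-!
Composing the endomorphisms `Mmap a g h b` amounts to multiplying the matrices
`!![a, X ^ r * g; h, b]` over `F[X]`, so the powers of `M_x` have explicit polynomial entries.
Since ranks of powers are convex, in dimension `7` the type `(3, 3, 1)` means `B ^ 3 = 0` and
`rank (B ^ 2) ≥ 2`. When `X ∣ a` and `X ∣ b`, divisibility of the entries by powers of `X` turns
this into `X ^ 2 ∣ a`, `X ^ 2 ∣ b`, `¬ X ∣ g`, `¬ X ∣ h`, that is, into `a₁ = b₁ = 0` and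
`g₀ ≠ 0`, `h₀ ≠ 0`. The latter set is dense in the closed set `a₁ = b₁ = 0`: through each point
of that linear space there is a line leaving the set at no more than two points, and over an
infinite field a polynomial vanishing at all other points of a line vanishes on the line.
-/

section Zariski

variable {F : Type*} [Field F] {u r : ℕ}

lemma zClosure_subset {S C : Set (Vars u r → F)} (hC : IsZClosed F u r C) (hSC : S ⊆ C) :
    zClosure F u r S ⊆ C :=
  Set.sInter_subset_of_mem ⟨hC, hSC⟩

lemma isZClosed_setOf_forall_eq_zero (I : Set (Vars u r)) :
    IsZClosed F u r {x | ∀ i ∈ I, x i = 0} :=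
  ⟨MvPolynomial.X '' I, by
    ext x
    simp only [zLocus, Set.mem_ofPred_eq, Set.forall_mem_image, MvPolynomial.eval_X]⟩

lemma exists_eval_eq_eval_line (p : MvPolynomial (Vars u r) F) (x v : Vars u r → F) :
    ∃ q : F[X], ∀ s : F, q.eval s = MvPolynomial.eval (x + s • v) p := by
  refine ⟨MvPolynomial.aeval (fun i => C (x i) + C (v i) * X) p, fun s => ?_⟩
  induction p using MvPolynomial.induction_on with
  | C c => simp
  | add p₁ p₂ h₁ h₂ => simp only [map_add, eval_add, h₁, h₂]
  | mul_X p i hp => simp [hp, mul_comm s]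

lemma mem_zClosure_of_infinite_line {S : Set (Vars u r → F)} {x : Vars u r → F}
    (v : Vars u r → F) (hS : {s : F | x + s • v ∈ S}.Infinite) : x ∈ zClosure F u r S := by
  rintro _ ⟨⟨T, rfl⟩, hST⟩ p hp
  obtain ⟨q, hq⟩ := exists_eval_eq_eval_line p x v
  have hq0 : q = 0 :=
    q.eq_zero_of_infinite_isRoot (hS.mono fun s hs => (hq s).trans (hST hs p hp))
  simpa [hq0] using (hq 0).symm

end Zariski

section RangeOfPowers

open Module

variable {F V : Type*} [Field F] [AddCommGroup V] [Module F V]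

lemma finrank_map_add_finrank_inf_ker {V' : Type*} [AddCommGroup V'] [Module F V']
    (f : V →ₗ[F] V') (W : Submodule F V) [FiniteDimensional F W] :
    finrank F (W.map f) + finrank F (W ⊓ LinearMap.ker f : Submodule F V) = finrank F W := by
  rw [← (f.domRestrict W).finrank_range_add_finrank_ker, LinearMap.range_domRestrict,
    LinearMap.ker_domRestrict, ← Submodule.finrank_map_subtype_eq,
    Submodule.map_comap_subtype]

lemma finrank_le_one_of_le_span_singleton {W : Submodule F V} {w : V}
    (hW : W ≤ Submodule.span F {w}) : finrank F W ≤ 1 :=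
  (Submodule.finrank_mono hW).trans ((finrank_span_le_card {w}).trans_eq (by simp))

-- `rank (B ^ s) - rank (B ^ (s + 1)) = dim (range (B ^ s) ⊓ ker B)` is antitone in `s`.
lemma finrank_range_pow_convex [FiniteDimensional F V] (B : End F V) (s : ℕ) :
    2 * finrank F (LinearMap.range (B ^ (s + 1))) ≤
      finrank F (LinearMap.range (B ^ s)) + finrank F (LinearMap.range (B ^ (s + 2))) := by
  have range_succ (k : ℕ) : LinearMap.range (B ^ (k + 1)) = (LinearMap.range (B ^ k)).map B := by
    rw [pow_succ', Module.End.mul_eq_comp, LinearMap.range_comp]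
  have hle : LinearMap.range (B ^ (s + 1)) ≤ LinearMap.range (B ^ s) := by
    rw [pow_succ, Module.End.mul_eq_comp]
    exact LinearMap.range_comp_le_range _ _
  have h₀ := finrank_map_add_finrank_inf_ker B (LinearMap.range (B ^ s))
  have h₁ := finrank_map_add_finrank_inf_ker B (LinearMap.range (B ^ (s + 1)))
  have hker := Submodule.finrank_mono (inf_le_inf_right (LinearMap.ker B) hle)
  rw [← range_succ] at h₀ h₁
  lia

theorem jordanTypeIs_three_three_one_iff (hV : finrank F V = 7) (B : End F V) :
    JordanTypeIs F B {3, 3, 1} ↔ B ^ 3 = 0 ∧ 2 ≤ finrank F (LinearMap.range (B ^ 2)) := by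
  have : FiniteDimensional F V := Module.finite_of_finrank_pos (by lia)
  have rank_nullity (s : ℕ) := (B ^ s).finrank_range_add_finrank_ker
  constructor
  · intro hB
    have h₂ : finrank F (LinearMap.ker (B ^ 2)) = 5 := by simpa using hB 2
    have h₃ : finrank F (LinearMap.ker (B ^ 3)) = 7 := by simpa using hB 3
    exact ⟨LinearMap.ker_eq_top.mp (Submodule.eq_top_of_finrank_eq (h₃.trans hV.symm)),
      by have := rank_nullity 2; lia⟩
  · rintro ⟨hB₃, hB₂⟩
    have hr₀ : finrank F (LinearMap.range (B ^ 0)) = 7 := by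
      rw [pow_zero, Module.End.one_eq_id, LinearMap.range_id, finrank_top, hV]
    have hr₃ : finrank F (LinearMap.range (B ^ 3)) = 0 := by
      rw [hB₃, LinearMap.range_zero, finrank_bot]
    -- Convexity leaves `7, 4, 2, 0` as the only sequence of ranks with `rank (B ^ 2) ≥ 2`.
    have hc₀ := finrank_range_pow_convex B 0
    have hc₁ := finrank_range_pow_convex B 1
    have hrk := rank_nullity
    intro s
    specialize hrk s
    match s with
    | 0 | 1 | 2 =>
      simp only [Multiset.insert_eq_cons, Multiset.map_cons, Multiset.map_singleton,
        Multiset.sum_cons, Multiset.sum_singleton]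
      lia
    | s + 3 =>
      rw [pow_add, hB₃, mul_zero, LinearMap.ker_zero, finrank_top, hV]
      simp

end RangeOfPowers

section TruncatedPolynomials

open Module

variable {F : Type*} [Field F]

/-- The class of a polynomial in `F[t]/(t^m)`, as an `F`-algebra map. -/
noncomputable def PQ.mk (m : ℕ) : F[X] →ₐ[F] PQ F m :=
  Ideal.Quotient.mkₐ F (Ideal.span {(X : F[X]) ^ m})

lemma PQ.mk_surjective (m : ℕ) : Function.Surjective (PQ.mk m : F[X] →ₐ[F] PQ F m) :=
  Ideal.Quotient.mkₐ_surjective F _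

lemma PQ.mk_eq_zero_iff {m : ℕ} {p : F[X]} : PQ.mk m p = 0 ↔ X ^ m ∣ p :=
  Ideal.Quotient.eq_zero_iff_dvd _ _

lemma PQ.finrank_eq (m : ℕ) : finrank F (PQ F m) = m := by
  rw [finrank_quotient_span_eq_natDegree, natDegree_X_pow]

instance PQ.finite (m : ℕ) : Module.Finite F (PQ F m) :=
  (monic_X_pow m).finite_adjoinRoot

-- Such a `c` represents a socle element, on which `F[X]` acts through constant coefficients.
lemma PQ.mk_mul_eq_coeff_zero_smul {m : ℕ} {c : F[X]} (hc : X ^ m ∣ X * c) (p : F[X]) :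
    PQ.mk m (c * p) = p.coeff 0 • PQ.mk m c := by
  rw [← map_smul, ← sub_eq_zero, ← map_sub, PQ.mk_eq_zero_iff, smul_eq_C_mul, mul_comm (C _),
    ← mul_sub]
  obtain ⟨q, hq⟩ : X ∣ p - C (p.coeff 0) := by simp [X_dvd_iff]
  rw [hq, ← mul_assoc, mul_comm c]
  exact hc.mul_right q

lemma mulQ_mk {m m' : ℕ} {c : F[X]} (hc : X ^ m' ∣ c * X ^ m) (p : F[X]) :
    mulQ F m m' c hc (PQ.mk m p) = PQ.mk m' (c * p) := rfl

lemma finrank_range_mulQ_X_pow_mul (k n : ℕ) {w : F[X]} (hw : ¬ X ∣ w) :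
    finrank F (LinearMap.range (mulQ F (k + n) (k + n) (X ^ k * w) (dvd_A F _ _))) = n := by
  set φ := mulQ F (k + n) (k + n) (X ^ k * w) (dvd_A F _ _)
  set π := mulQ F (k + n) n 1 (by rw [one_mul]; exact pow_dvd_pow _ (Nat.le_add_left n k))
  have hker : LinearMap.ker φ = LinearMap.ker π := by
    ext v
    obtain ⟨p, rfl⟩ := PQ.mk_surjective _ v
    rw [LinearMap.mem_ker, LinearMap.mem_ker, mulQ_mk, mulQ_mk, PQ.mk_eq_zero_iff,
      PQ.mk_eq_zero_iff, one_mul, mul_assoc, pow_add,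
      mul_dvd_mul_iff_left (pow_ne_zero _ X_ne_zero)]
    exact ⟨fun h => prime_X.pow_dvd_of_dvd_mul_left n hw h, fun h => h.mul_left w⟩
  have hπ : Function.Surjective π := fun v => by
    obtain ⟨p, rfl⟩ := PQ.mk_surjective _ v
    exact ⟨PQ.mk _ p, by rw [mulQ_mk, one_mul]⟩
  have hφ_rank := φ.finrank_range_add_finrank_ker
  have hπ_rank := π.finrank_range_add_finrank_ker
  rw [LinearMap.range_eq_top.mpr hπ, finrank_top, PQ.finrank_eq] at hπ_rank
  rw [hker] at hφ_rank
  lia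

end TruncatedPolynomials

section BlockEndomorphisms

open Module

variable {F : Type*} [Field F] {u r : ℕ} {hru : r ≤ u}

lemma Mmap_mk (a g h b p q : F[X]) :
    Mmap F u r hru a g h b (PQ.mk u p, PQ.mk (u - r) q) =
      (PQ.mk u (a * p + X ^ r * g * q), PQ.mk (u - r) (h * p + b * q)) := rfl

lemma Mmap_mul (a g h b a' g' h' b' : F[X]) :
    (Mmap F u r hru a g h b * Mmap F u r hru a' g' h' b' : End F (PQ F u × PQ F (u - r))) =
      Mmap F u r hru (a * a' + X ^ r * g * h') (a * g' + g * b')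
        (h * a' + b * h') (X ^ r * h * g' + b * b') := by
  refine LinearMap.ext fun ⟨v, w⟩ => ?_
  obtain ⟨p, rfl⟩ := PQ.mk_surjective _ v
  obtain ⟨q, rfl⟩ := PQ.mk_surjective _ w
  simp only [Module.End.mul_apply, Mmap_mk]
  exact Prod.ext (congrArg (PQ.mk u) (by ring)) (congrArg (PQ.mk (u - r)) (by ring))

lemma Mmap_sq (a g h b : F[X]) :
    (Mmap F u r hru a g h b : End F (PQ F u × PQ F (u - r))) ^ 2 =
      Mmap F u r hru (a ^ 2 + X ^ r * (g * h)) ((a + b) * g)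
        ((a + b) * h) (X ^ r * (g * h) + b ^ 2) := by
  refine (sq _).trans ((Mmap_mul a g h b a g h b).trans ?_)
  congr 1 <;> ring

lemma Mmap_pow_three (a g h b : F[X]) :
    (Mmap F u r hru a g h b : End F (PQ F u × PQ F (u - r))) ^ 3 =
      Mmap F u r hru (a ^ 3 + X ^ r * ((2 * a + b) * (g * h)))
        ((a ^ 2 + a * b + b ^ 2 + X ^ r * (g * h)) * g)
        ((a ^ 2 + a * b + b ^ 2 + X ^ r * (g * h)) * h)
        (X ^ r * ((a + 2 * b) * (g * h)) + b ^ 3) := by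
  refine (pow_succ _ 2).trans ?_
  rw [Mmap_sq, Mmap_mul]
  congr 1 <;> ring

lemma X_pow_dvd_X_pow_mul_iff (hru : r ≤ u) {c : F[X]} : X ^ u ∣ X ^ r * c ↔ X ^ (u - r) ∣ c := by
  rw [← pow_mul_pow_sub X hru, mul_dvd_mul_iff_left (pow_ne_zero r X_ne_zero)]

lemma Mmap_eq_zero_iff {a g h b : F[X]} :
    Mmap F u r hru a g h b = 0 ↔
      X ^ u ∣ a ∧ X ^ (u - r) ∣ g ∧ X ^ (u - r) ∣ h ∧ X ^ (u - r) ∣ b := by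
  rw [← X_pow_dvd_X_pow_mul_iff hru (c := g)]
  constructor
  · intro hM
    have h₁ := LinearMap.congr_fun hM (PQ.mk u 1, PQ.mk (u - r) 0)
    have h₂ := LinearMap.congr_fun hM (PQ.mk u 0, PQ.mk (u - r) 1)
    simp only [Mmap_mk, mul_one, mul_zero, add_zero, zero_add, LinearMap.zero_apply,
      Prod.mk_eq_zero, PQ.mk_eq_zero_iff] at h₁ h₂
    exact ⟨h₁.1, h₂.1, h₁.2, h₂.2⟩
  · rintro ⟨ha, hg, hh, hb⟩
    refine LinearMap.ext fun ⟨v, w⟩ => ?_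
    obtain ⟨p, rfl⟩ := PQ.mk_surjective _ v
    obtain ⟨q, rfl⟩ := PQ.mk_surjective _ w
    simp only [Mmap_mk, LinearMap.zero_apply, Prod.mk_eq_zero, PQ.mk_eq_zero_iff]
    exact ⟨dvd_add (ha.mul_right p) (hg.mul_right q), dvd_add (hh.mul_right p) (hb.mul_right q)⟩

lemma finrank_range_mulQ_le_finrank_range_Mmap (a g h b : F[X]) :
    finrank F (LinearMap.range (mulQ F u u a (dvd_A F u a))) ≤
      finrank F (LinearMap.range (Mmap F u r hru a g h b)) := by
  have hcomp : mulQ F u u a (dvd_A F u a) =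
      LinearMap.fst F _ _ ∘ₗ Mmap F u r hru a g h b ∘ₗ LinearMap.inl F _ _ := by
    refine LinearMap.ext fun v => ?_
    obtain ⟨p, rfl⟩ := PQ.mk_surjective _ v
    rw [LinearMap.comp_apply, LinearMap.comp_apply, LinearMap.inl_apply, ← map_zero (PQ.mk (u - r)),
      Mmap_mk, LinearMap.fst_apply, mulQ_mk, mul_zero, add_zero]
  rw [hcomp, LinearMap.range_comp]
  exact (Submodule.finrank_map_le _ _).trans
    (Submodule.finrank_mono (LinearMap.range_comp_le_range _ _))

lemma finrank_range_Mmap_le_one_of_second_column_eq_zero {a g h b : F[X]} (ha : X ^ u ∣ X * a)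
    (hg : X ^ (u - r) ∣ g) (hh : X ^ (u - r) ∣ X * h) (hb : X ^ (u - r) ∣ b) :
    finrank F (LinearMap.range (Mmap F u r hru a g h b)) ≤ 1 := by
  refine finrank_le_one_of_le_span_singleton (w := (PQ.mk u a, PQ.mk (u - r) h)) ?_
  rintro _ ⟨⟨v, w⟩, rfl⟩
  obtain ⟨p, rfl⟩ := PQ.mk_surjective _ v
  obtain ⟨q, rfl⟩ := PQ.mk_surjective _ w
  have hgq : PQ.mk u (X ^ r * g * q) = 0 :=
    PQ.mk_eq_zero_iff.mpr (((X_pow_dvd_X_pow_mul_iff hru).mpr hg).mul_right q)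
  have hbq : PQ.mk (u - r) (b * q) = 0 := PQ.mk_eq_zero_iff.mpr (hb.mul_right q)
  refine Submodule.mem_span_singleton.mpr ⟨p.coeff 0, ?_⟩
  rw [Mmap_mk, map_add, map_add, hgq, hbq, add_zero, add_zero,
    PQ.mk_mul_eq_coeff_zero_smul ha, PQ.mk_mul_eq_coeff_zero_smul hh, Prod.smul_mk]

lemma finrank_range_Mmap_le_one_of_second_row_eq_zero {n : ℕ} {hrn : r ≤ n + 1} {a g h b : F[X]}
    (ha : X ^ n ∣ a) (hg : X ^ n ∣ X ^ r * g) (hh : X ^ (n + 1 - r) ∣ h)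
    (hb : X ^ (n + 1 - r) ∣ b) :
    finrank F (LinearMap.range (Mmap F (n + 1) r hrn a g h b)) ≤ 1 := by
  refine finrank_le_one_of_le_span_singleton (w := (PQ.mk (n + 1) (X ^ n), 0)) ?_
  rintro _ ⟨⟨v, w⟩, rfl⟩
  obtain ⟨p, rfl⟩ := PQ.mk_surjective _ v
  obtain ⟨q, rfl⟩ := PQ.mk_surjective _ w
  obtain ⟨c, hc⟩ : X ^ n ∣ a * p + X ^ r * g * q := dvd_add (ha.mul_right p) (hg.mul_right q)
  have hhb : PQ.mk (n + 1 - r) (h * p + b * q) = 0 :=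
    PQ.mk_eq_zero_iff.mpr (dvd_add (hh.mul_right p) (hb.mul_right q))
  refine Submodule.mem_span_singleton.mpr ⟨c.coeff 0, ?_⟩
  rw [Mmap_mk, hc, hhb, PQ.mk_mul_eq_coeff_zero_smul (pow_succ' X n).dvd, Prod.smul_mk, smul_zero]

end BlockEndomorphisms

section TypeThreeThreeOne

open Module

lemma sq_dvd_left_of_prime_pow_five_dvd {R : Type*} [CommRing R] [IsDomain R] {π a b c : R}
    (hπ : Prime π) (ha : π ∣ a) (hb : π ∣ b) (h : π ^ 5 ∣ a ^ 3 + π ^ 3 * ((2 * a + b) * c)) :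
    π ^ 2 ∣ a := by
  obtain ⟨a, rfl⟩ := ha
  obtain ⟨b, rfl⟩ := hb
  have hfactor : π ^ 3 * π ^ 2 ∣ π ^ 3 * (a ^ 3 + π * ((2 * a + b) * c)) := by
    convert h using 1 <;> ring
  have hdvd := (dvd_pow_self π two_ne_zero).trans
    ((mul_dvd_mul_iff_left (pow_ne_zero 3 hπ.ne_zero)).mp hfactor)
  rw [sq]
  exact mul_dvd_mul_left π (hπ.dvd_of_dvd_pow ((dvd_add_left (dvd_mul_right _ _)).mp hdvd))

lemma sq_dvd_right_of_prime_pow_five_dvd {R : Type*} [CommRing R] [IsDomain R] {π a b c : R}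
    (hπ : Prime π) (ha : π ^ 2 ∣ a) (hb : π ∣ b) (hc : ¬ π ∣ c)
    (h : π ^ 5 ∣ a ^ 3 + π ^ 3 * ((2 * a + b) * c)) : π ^ 2 ∣ b := by
  obtain ⟨a, rfl⟩ := ha
  obtain ⟨b, rfl⟩ := hb
  have hfactor : π ^ 4 * π ∣ π ^ 4 * (π * (π * a ^ 3 + 2 * a * c) + b * c) := by
    convert h using 1 <;> ring
  have hdvd := (mul_dvd_mul_iff_left (pow_ne_zero 4 hπ.ne_zero)).mp hfactor
  rw [sq]
  exact mul_dvd_mul_left π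
    ((hπ.dvd_or_dvd ((dvd_add_right (dvd_mul_right _ _)).mp hdvd)).resolve_right hc)

variable {F : Type*} [Field F] {a g h b : F[X]} {hru : 3 ≤ 5}

lemma not_X_dvd_of_two_le_finrank_range_Mmap_sq (ha : X ^ 2 ∣ a) (hb : X ∣ b)
    (hrank : 2 ≤ finrank F (LinearMap.range
      ((Mmap F 5 3 hru a g h b : End F (PQ F 5 × PQ F (5 - 3))) ^ 2))) :
    ¬ X ∣ g ∧ ¬ X ∣ h := by
  rw [Mmap_sq] at hrank
  have hab : X ∣ a + b := dvd_add ((dvd_pow_self X two_ne_zero).trans ha) hb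
  have ha₄ : X ^ 4 ∣ a ^ 2 := by simpa only [← pow_mul] using pow_dvd_pow_of_dvd ha 2
  have hentry (hgh : X ∣ g * h) : X ^ 4 ∣ a ^ 2 + X ^ 3 * (g * h) :=
    dvd_add ha₄ (pow_succ (X : F[X]) 3 ▸ mul_dvd_mul_left (X ^ 3) hgh)
  have hb₂ : X ^ (5 - 3) ∣ b ^ 2 := pow_dvd_pow_of_dvd hb 2
  have hcorner : X ^ (5 - 3) ∣ X ^ 3 * (g * h) + b ^ 2 :=
    dvd_add ((pow_dvd_pow X (by norm_num)).mul_right _) hb₂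
  constructor
  · intro hg
    refine absurd (finrank_range_Mmap_le_one_of_second_column_eq_zero ?_ ?_ ?_ hcorner)
      (Nat.not_le.mpr hrank)
    · exact pow_succ' (X : F[X]) 4 ▸ mul_dvd_mul_left X (hentry (hg.mul_right h))
    · exact sq (X : F[X]) ▸ mul_dvd_mul hab hg
    · exact sq (X : F[X]) ▸ mul_dvd_mul_left X (hab.mul_right h)
  · intro hh
    refine absurd
      (finrank_range_Mmap_le_one_of_second_row_eq_zero (hentry (hh.mul_left g)) ?_ ?_ hcorner)
      (Nat.not_le.mpr hrank)
    · exact pow_succ (X : F[X]) 3 ▸ mul_dvd_mul_left (X ^ 3) (hab.mul_right g)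
    · exact sq (X : F[X]) ▸ mul_dvd_mul hab hh

lemma Mmap_pow_three_eq_zero (ha : X ^ 2 ∣ a) (hb : X ^ 2 ∣ b) :
    (Mmap F 5 3 hru a g h b : End F (PQ F 5 × PQ F (5 - 3))) ^ 3 = 0 := by
  obtain ⟨a, rfl⟩ := ha
  obtain ⟨b, rfl⟩ := hb
  rw [Mmap_pow_three, Mmap_eq_zero_iff]
  have hsym : X ^ (5 - 3) ∣
      (X ^ 2 * a) ^ 2 + X ^ 2 * a * (X ^ 2 * b) + (X ^ 2 * b) ^ 2 + X ^ 3 * (g * h) :=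
    ⟨X ^ 2 * (a ^ 2 + a * b + b ^ 2) + X * (g * h), by ring⟩
  exact ⟨⟨X * a ^ 3 + (2 * a + b) * (g * h), by ring⟩, hsym.mul_right g, hsym.mul_right h,
    ⟨X ^ 4 * b ^ 3 + X ^ 3 * ((a + 2 * b) * (g * h)), by ring⟩⟩

lemma two_le_finrank_range_Mmap_sq (ha : X ^ 2 ∣ a) (hg : ¬ X ∣ g) (hh : ¬ X ∣ h) :
    2 ≤ finrank F (LinearMap.range
      ((Mmap F 5 3 hru a g h b : End F (PQ F 5 × PQ F (5 - 3))) ^ 2)) := by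
  obtain ⟨a, rfl⟩ := ha
  have hunit : ¬ X ∣ X * a ^ 2 + g * h := by
    rw [dvd_add_right (dvd_mul_right _ _)]
    exact prime_X.not_dvd_mul hg hh
  have hentry : (X ^ 2 * a) ^ 2 + X ^ 3 * (g * h) = X ^ 3 * (X * a ^ 2 + g * h) := by ring
  rw [Mmap_sq, hentry]
  exact (finrank_range_mulQ_X_pow_mul 3 2 hunit).ge.trans
    (finrank_range_mulQ_le_finrank_range_Mmap _ _ _ _)

theorem jordanTypeIs_Mmap_three_three_one_iff (ha : X ∣ a) (hb : X ∣ b) :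
    JordanTypeIs F (Mmap F 5 3 hru a g h b) {3, 3, 1} ↔
      X ^ 2 ∣ a ∧ X ^ 2 ∣ b ∧ ¬ X ∣ g ∧ ¬ X ∣ h := by
  have hV : finrank F (PQ F 5 × PQ F (5 - 3)) = 7 := by
    rw [finrank_prod, PQ.finrank_eq, PQ.finrank_eq]
  rw [jordanTypeIs_three_three_one_iff hV]
  constructor
  · rintro ⟨hcube, hrank⟩
    have hentry : X ^ 5 ∣ a ^ 3 + X ^ 3 * ((2 * a + b) * (g * h)) := by
      rw [Mmap_pow_three, Mmap_eq_zero_iff] at hcube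
      exact hcube.1
    have ha₂ := sq_dvd_left_of_prime_pow_five_dvd prime_X ha hb hentry
    obtain ⟨hg, hh⟩ := not_X_dvd_of_two_le_finrank_range_Mmap_sq ha₂ hb hrank
    have hgh : ¬ X ∣ g * h := prime_X.not_dvd_mul hg hh
    exact ⟨ha₂, sq_dvd_right_of_prime_pow_five_dvd prime_X ha₂ hb hgh hentry, hg, hh⟩
  · rintro ⟨ha₂, hb₂, hg, hh⟩
    exact ⟨Mmap_pow_three_eq_zero ha₂ hb₂, two_le_finrank_range_Mmap_sq ha₂ hg hh⟩

end TypeThreeThreeOne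

section Coordinates

variable {F : Type*} [Field F] {u r : ℕ} (x : Vars u r → F)

lemma X_dvd_paOf : X ∣ paOf F u r x :=
  Finset.dvd_sum fun _ _ => ((dvd_pow_self X (Nat.succ_ne_zero _)).mul_left _)

lemma X_dvd_pbOf : X ∣ pbOf F u r x :=
  Finset.dvd_sum fun _ _ => ((dvd_pow_self X (Nat.succ_ne_zero _)).mul_left _)

lemma coeff_paOf_succ (i : Fin (u - 1)) : (paOf F u r x).coeff (i + 1) = x (Sum.inl i) := by
  simp [paOf, coeff_X_pow, Fin.val_inj]

lemma coeff_pbOf_succ (i : Fin (u - r - 1)) :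
    (pbOf F u r x).coeff (i + 1) = x (Sum.inr (Sum.inl i)) := by
  simp [pbOf, coeff_X_pow, Fin.val_inj]

lemma coeff_pgOf (i : Fin (u - r)) :
    (pgOf F u r x).coeff i = x (Sum.inr (Sum.inr (Sum.inl i))) := by
  simp [pgOf, coeff_X_pow, Fin.val_inj]

lemma coeff_phOf (i : Fin (u - r)) :
    (phOf F u r x).coeff i = x (Sum.inr (Sum.inr (Sum.inr i))) := by
  simp [phOf, coeff_X_pow, Fin.val_inj]

lemma X_sq_dvd_iff_coeff_one_eq_zero {p : F[X]} (hp : X ∣ p) : X ^ 2 ∣ p ↔ p.coeff 1 = 0 := by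
  obtain ⟨q, rfl⟩ := hp
  rw [sq, mul_dvd_mul_iff_left X_ne_zero, X_dvd_iff, coeff_X_mul]

theorem jordanTypeIs_Mx_three_three_one_iff (hru : 3 ≤ 5) (x : Vars 5 3 → F) :
    JordanTypeIs F (Mx F 5 3 hru x) {3, 3, 1} ↔
      x (Sum.inl 0) = 0 ∧ x (Sum.inr (Sum.inl 0)) = 0 ∧
        x (Sum.inr (Sum.inr (Sum.inl 0))) ≠ 0 ∧ x (Sum.inr (Sum.inr (Sum.inr 0))) ≠ 0 := by
  rw [← coeff_paOf_succ x, ← coeff_pbOf_succ x, ← coeff_pgOf x, ← coeff_phOf x]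
  refine (jordanTypeIs_Mmap_three_three_one_iff (X_dvd_paOf x) (X_dvd_pbOf x)).trans ?_
  rw [X_sq_dvd_iff_coeff_one_eq_zero (X_dvd_paOf x), X_sq_dvd_iff_coeff_one_eq_zero (X_dvd_pbOf x),
    X_dvd_iff, X_dvd_iff]
  rfl

end Coordinates

/-- For `Q = (5,2)` (so `u = 5`, `r = 3`, `N = 9`), the Zariski closure
of the locus of points `x` with Jordan type of `M_x` equal to `(3,3,1)` is exactly
`{a_1 = 0, b_1 = 0}`. -/
theorem statement17 (F : Type*) [Field F] [Infinite F] :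
    zClosure F 5 3
        {x | JordanTypeIs F (Mx F 5 3 (by norm_num) x) ({3, 3, 1} : Multiset ℕ)} =
      {x : Vars 5 3 → F |
        x (Sum.inl ⟨0, by norm_num⟩) = 0 ∧ x (Sum.inr (Sum.inl ⟨0, by norm_num⟩)) = 0} := by
  simp only [jordanTypeIs_Mx_three_three_one_iff]
  refine Set.Subset.antisymm ?_ fun x hx => ?_
  · have hclosed := isZClosed_setOf_forall_eq_zero (F := F) (u := 5) (r := 3)
      {Sum.inl 0, Sum.inr (Sum.inl 0)}
    simp only [Set.forall_mem_insert, Set.mem_singleton_iff, forall_eq] at hclosed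
    exact zClosure_subset hclosed fun x hx => ⟨hx.1, hx.2.1⟩
  · let ghDirection : Vars 5 3 → F := Sum.elim 0 (Sum.elim 0 1)
    refine mem_zClosure_of_infinite_line ghDirection ?_
    have hbad : Set.Finite
        {-x (Sum.inr (Sum.inr (Sum.inl 0))), -x (Sum.inr (Sum.inr (Sum.inr 0)))} :=
      Set.toFinite _
    refine hbad.infinite_compl.mono fun s hs => ?_
    obtain ⟨ha, hb⟩ : x (Sum.inl 0) = 0 ∧ x (Sum.inr (Sum.inl 0)) = 0 := hx
    simpa [ghDirection, ha, hb, eq_neg_iff_add_eq_zero, add_comm s] using hs
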